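/- Let (U,F,t) be a Set Cover instance in which every element belongs to at least one set. Then there exists X ⊆ F with |X| ≤ t and ∪_{S∈X} S = U if and only if the subdivided-star gerrymandering instance constructed from (U,F,t) admits a district-partition into k = t+4 districts that is satisfying for the preferred candidate p. -/

import Mathlib

attribute [local instance] Classical.propDecidable

/-- Candidate `c` *leads* district `D` (unweighted): `c`'s vote count is at least that of
every candidate. -/
def leadsIn {V C : Type*} (χ : V → C) (c : C) (D : Finset V) : Prop :=
  ∀ c' : C, (D.filter fun x => χ x = c').card ≤ (D.filter fun x => χ x = c).card

/-- Candidate `c` *wins* district `D` (unweighted): `c`'s vote count strictly exceeds that of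
every other candidate. -/
def winsIn {V C : Type*} (χ : V → C) (c : C) (D : Finset V) : Prop :=
  ∀ c' : C, c' ≠ c → (D.filter fun x => χ x = c').card < (D.filter fun x => χ x = c).card

/-- A district-partition of `G` into `k` districts: `k` pairwise-disjoint nonempty vertex sets
covering all vertices, each inducing a connected subgraph. -/
def IsDistrictPartition {V : Type*} (G : SimpleGraph V) (k : ℕ) (P : Finset (Finset V)) : Prop :=
  P.card = k ∧ (∀ D ∈ P, D.Nonempty) ∧
    (∀ D ∈ P, ∀ D' ∈ P, D ≠ D' → Disjoint D D') ∧
    (∀ x : V, ∃ D ∈ P, x ∈ D) ∧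
    (∀ D ∈ P, (G.induce (D : Set V)).Connected)

/-- A district-partition is *satisfying* for the preferred candidate `p` if `p` wins strictly
more districts than any other candidate leads. -/
def SatisfyingFor {V C : Type*} (χ : V → C) (p : C) (P : Finset (Finset V)) : Prop :=
  ∀ q : C, q ≠ p →
    (P.filter fun D => leadsIn χ q D).card < (P.filter fun D => winsIn χ p D).card

/-- Vertices of the subdivided-star gerrymandering instance: the root `r`; branch 1 vertices
`c_1, c_2, u_1, …, u_n`; branch 2 vertices `w_1, …, w_{t-1}`; and, on each of the `t`
selection branches `s`, the initial vertices `v_0^1, …, v_0^n` (constructor `v0`), the group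
vertices `x_i` and `v_i^j` for `i ∈ [m]` (group `g_i`), and the final vertices
`y_0, …, y_m`. -/
inductive VS (n m t : ℕ) : Type where
  | root
  | c1
  | c2
  | u (j : Fin n)
  | w (i : Fin (t - 1))
  | v0 (s : Fin t) (j : Fin n)
  | x (s : Fin t) (i : Fin m)
  | v (s : Fin t) (i : Fin m) (j : Fin n)
  | y (s : Fin t) (i : Fin (m + 1))
  deriving DecidableEq, Fintype

/-- Candidates of the subdivided-star instance: the preferred candidate `p`, the ally `q`,
element candidates `a_j` for `j ∈ [n]`, and branch candidates `b_s` for `s ∈ [t]`. -/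
inductive CS (n t : ℕ) : Type where
  | p
  | q
  | a (j : Fin n)
  | b (s : Fin t)
  deriving DecidableEq

/-- Candidate preferences of the subdivided-star instance. -/
def chiS {n m t : ℕ} : VS n m t → CS n t
  | .root => .q
  | .c1 => .p
  | .c2 => .p
  | .u j => .a j
  | .w _ => .q
  | .v0 _ j => .a j
  | .x _ _ => .q
  | .v _ _ j => .a j
  | .y s _ => .b s

/-- Position of each non-root vertex along its branch, as a pair
(branch index, 0-based distance from the root along the branch minus one); the vertex at
position 0 of each branch is adjacent to the root.  Branch 0 is `c_1, c_2, u_1, …, u_n`;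
branch 1 is `w_1, …, w_{t-1}`; branch `2 + s` is selection branch `s`, ordered as
`v_0^1, …, v_0^n`, then groups `g_1, …, g_m` (group `g_i` consists of the vertices `v_i^j`
with `e_j ∉ S_i` in increasing order of `j`, then `x_i`, then the vertices `v_i^j` with
`e_j ∈ S_i` in increasing order of `j`), then `y_0, …, y_m`. -/
def posS {n m t : ℕ} (S : Fin m → Finset (Fin n)) : VS n m t → Option (ℕ × ℕ)
  | .root => none
  | .c1 => some (0, 0)
  | .c2 => some (0, 1)
  | .u j => some (0, 2 + (j : ℕ))
  | .w i => some (1, (i : ℕ))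
  | .v0 s j => some (2 + (s : ℕ), (j : ℕ))
  | .x s i => some (2 + (s : ℕ), n + (i : ℕ) * (n + 1) + (n - (S i).card))
  | .v s i j => some (2 + (s : ℕ), n + (i : ℕ) * (n + 1) +
      (if j ∈ S i then n - (S i).card + 1 + ((S i).filter fun j' => j' < j).card
       else ((S i)ᶜ.filter fun j' => j' < j).card))
  | .y s i => some (2 + (s : ℕ), n + m * (n + 1) + (i : ℕ))

/-- The subdivided star: the root is adjacent to the vertex at position 0 of each branch, and
vertices at consecutive positions of the same branch are adjacent. -/
def GS {n m t : ℕ} (S : Fin m → Finset (Fin n)) : SimpleGraph (VS n m t) :=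
  SimpleGraph.fromRel (fun a b =>
    (a = VS.root ∧ ∃ br, posS S b = some (br, 0)) ∨
    (∃ br k, posS S a = some (br, k) ∧ posS S b = some (br, k + 1)))

/-!
There are `t + 4` districts but only two voters of `p`, so some district contains no voter of `p`
and is led by another candidate. Hence `p` has to win two districts, which makes `{c_1}` and
`{c_2}` districts and lets every other candidate lead at most one district.

The district of `u_j` lies inside `u_1, …, u_n` and uses up the lead of `a_j`, so no district off
branch 1 is led by an `a_j`. A district that contains `v_0^j` of branch `s` is not led by `b_s`
either, since with every `y_i` it contains a separate voter of `a_j`. So `q` leads the district `R`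
of the root, and `R` contains every `v_0^j`. Pair the `t` vertices root, `w_1, …, w_{t-1}` with the
`t` vertices `v_0^j`, and each `x_i` with `v_i^j` on the same branch: for `a_j` not to tie with `q`
in `R`, some branch must leave `R` after `x_i` and before `v_i^j`, which forces `e_j ∈ S_i`. Each
selection branch leaves `R` in a single group, so the groups where this happens form a cover by at
most `t` sets. Conversely, a cover with one set `S_i` per selection branch yields a solution by
cutting that branch right after `x_i`.
-/

section Votes

variable {V C : Type*} {χ : V → C} {c c' : C} {D : Finset V}

/-- The number of votes that candidate `c` receives in the district `D`; the inequalities in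
`leadsIn` and `winsIn` compare these numbers. -/
noncomputable def votes (χ : V → C) (c : C) (D : Finset V) : ℕ :=
  (D.filter fun x => χ x = c).card

theorem votes_pos_iff : 0 < votes χ c D ↔ ∃ x ∈ D, χ x = c := by
  simp only [votes, Finset.card_pos, Finset.Nonempty, Finset.mem_filter]

theorem votes_eq_zero_iff : votes χ c D = 0 ↔ ∀ x ∈ D, χ x ≠ c :=
  Finset.card_filter_eq_zero_iff

theorem exists_leadsIn (χ : V → C) (hD : D.Nonempty) : ∃ c, leadsIn χ c D := by
  obtain ⟨x, -, hmax⟩ := D.exists_max_image (fun x => votes χ (χ x) D) hD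
  refine ⟨χ x, fun c' => ?_⟩
  change votes χ c' D ≤ votes χ (χ x) D
  rcases (votes χ c' D).eq_zero_or_pos with hzero | hpos
  · exact hzero.trans_le (Nat.zero_le _)
  · obtain ⟨z, hz, rfl⟩ := votes_pos_iff.1 hpos
    exact hmax z hz

theorem leadsIn.exists_mem (h : leadsIn χ c D) (hD : D.Nonempty) : ∃ x ∈ D, χ x = c := by
  obtain ⟨z, hz⟩ := hD
  exact votes_pos_iff.1 ((votes_pos_iff.2 ⟨z, hz, rfl⟩).trans_le (h (χ z)))

theorem leadsIn.of_votes_le (h : leadsIn χ c D) (hle : votes χ c D ≤ votes χ c' D) :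
    leadsIn χ c' D :=
  fun d => (h d).trans hle

theorem leadsIn_of_injOn (hχ : Set.InjOn χ D) {x : V} (hx : x ∈ D) : leadsIn χ (χ x) D := by
  intro d
  have hle : votes χ d D ≤ 1 := Finset.card_le_one.2 fun y hy z hz => by
    rw [Finset.mem_filter] at hy hz
    exact hχ hy.1 hz.1 (hy.2.trans hz.2.symm)
  exact hle.trans (votes_pos_iff.2 ⟨x, hx, rfl⟩)

theorem winsIn.eq_of_leadsIn (h : winsIn χ c D) (h' : leadsIn χ c' D) : c' = c := by
  by_contra hne
  exact (h c' hne).not_ge (h' c)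

theorem winsIn.leadsIn (h : winsIn χ c D) : leadsIn χ c D := fun d => by
  rcases eq_or_ne d c with rfl | hne
  · exact le_rfl
  · exact (h d hne).le

theorem winsIn_of_forall_mem (hD : D.Nonempty) (h : ∀ x ∈ D, χ x = c) : winsIn χ c D := by
  intro d hd
  obtain ⟨x, hx⟩ := hD
  have hzero : votes χ d D = 0 := votes_eq_zero_iff.2 fun y hy hyd => hd (hyd ▸ h y hy)
  exact hzero.trans_lt (votes_pos_iff.2 ⟨x, hx, h x hx⟩)

theorem winsIn.eq_singleton {x : V} (h : winsIn χ c D) (hx : x ∈ D)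
    (huniq : ∀ y ∈ D, χ y = c → y = x) : D = {x} := by
  have hle : votes χ c D ≤ 1 := Finset.card_le_one.2 fun y hy z hz => by
    rw [Finset.mem_filter] at hy hz
    rw [huniq y hy.1 hy.2, huniq z hz.1 hz.2]
  refine Finset.eq_singleton_iff_unique_mem.2 ⟨hx, fun y hy => huniq y hy ?_⟩
  by_contra hne
  have hpos : 0 < votes χ (χ y) D := votes_pos_iff.2 ⟨y, hy, rfl⟩
  have hlt : votes χ (χ y) D < votes χ c D := h _ hne
  omega

section Counting

variable {ι : Type*} {f g : ι → V}

theorem votes_le_card_of_forall_exists [Fintype ι] (hf : ∀ x ∈ D, χ x = c → ∃ i, f i = x) :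
    votes χ c D ≤ (Finset.univ.filter fun i => f i ∈ D).card := by
  refine (Finset.card_le_card fun x hx => ?_).trans (Finset.card_image_le (f := f))
  obtain ⟨hxD, hxc⟩ := Finset.mem_filter.1 hx
  obtain ⟨i, rfl⟩ := hf x hxD hxc
  exact Finset.mem_image_of_mem f (by simpa using hxD)

theorem card_le_votes_of_injective [Fintype ι] (hg : g.Injective) (hgc : ∀ i, χ (g i) = c) :
    (Finset.univ.filter fun i => g i ∈ D).card ≤ votes χ c D :=
  Finset.card_le_card_of_injOn g (fun i hi => by simpa [hgc] using hi) hg.injOn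

variable [Finite ι]

theorem votes_le_votes_of_forall_imp (hf : ∀ x ∈ D, χ x = c → ∃ i, f i = x)
    (hg : g.Injective) (hgc : ∀ i, χ (g i) = c') (h : ∀ i, f i ∈ D → g i ∈ D) :
    votes χ c D ≤ votes χ c' D := by
  have := Fintype.ofFinite ι
  exact (votes_le_card_of_forall_exists hf).trans <|
    (Finset.card_le_card (Finset.monotone_filter_right _ fun i _ => h i)).trans
      (card_le_votes_of_injective hg hgc)

theorem votes_lt_votes_of_forall_imp (hf : ∀ x ∈ D, χ x = c → ∃ i, f i = x)
    (hg : g.Injective) (hgc : ∀ i, χ (g i) = c') (h : ∀ i, f i ∈ D → g i ∈ D)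
    (hstrict : ∃ i, f i ∉ D ∧ g i ∈ D) : votes χ c D < votes χ c' D := by
  have := Fintype.ofFinite ι
  obtain ⟨i, hfi, hgi⟩ := hstrict
  refine (votes_le_card_of_forall_exists hf).trans_lt <|
    (Finset.card_lt_card ?_).trans_le (card_le_votes_of_injective hg hgc)
  exact (Finset.ssubset_iff_of_subset (Finset.monotone_filter_right _ fun i _ => h i)).2
    ⟨i, by simpa using hgi, by simpa using hfi⟩

end Counting

end Votes

section DistrictPartition

variable {V C : Type*} {G : SimpleGraph V} {k : ℕ} {P : Finset (Finset V)} {χ : V → C} {p : C}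

theorem IsDistrictPartition.eq_of_mem (hP : IsDistrictPartition G k P) {D D' : Finset V}
    (hD : D ∈ P) (hD' : D' ∈ P) {x : V} (hx : x ∈ D) (hx' : x ∈ D') : D = D' := by
  by_contra hne
  exact Finset.disjoint_left.1 (hP.2.2.1 D hD D' hD' hne) hx hx'

theorem IsDistrictPartition.card_le_card_of_forall_exists_mem (hP : IsDistrictPartition G k P)
    {Q : Finset (Finset V)} (hQ : Q ⊆ P) {T : Finset V} (hT : ∀ D ∈ Q, ∃ x ∈ T, x ∈ D) :
    Q.card ≤ T.card :=
  Finset.card_le_card_of_forall_subsingleton (fun D x => x ∈ D) hT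
    fun _ _ _ hD _ hD' => hP.eq_of_mem (hQ hD.1) (hQ hD'.1) hD.2 hD'.2

/-- The set of vertices carrying the label `l`. A partition into districts is given by a labelling
of the vertices, its districts being the fibres. -/
noncomputable def labelFiber {L : Type*} [Fintype V] (label : V → L) (l : L) : Finset V :=
  Finset.univ.filter fun x => label x = l

theorem mem_labelFiber {L : Type*} [Fintype V] {label : V → L} {l : L} {x : V} :
    x ∈ labelFiber label l ↔ label x = l := by
  simp [labelFiber]

theorem isDistrictPartition_image_labelFiber {L : Type*} [Fintype V] [DecidableEq V] [Fintype L]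
    (label : V → L) (hconn : ∀ l, (G.induce (labelFiber label l : Set V)).Connected) :
    IsDistrictPartition G (Fintype.card L) (Finset.univ.image (labelFiber label)) := by
  have hnonempty (l : L) : (labelFiber label l).Nonempty := by
    obtain ⟨⟨x, hx⟩⟩ := (hconn l).nonempty
    exact ⟨x, hx⟩
  have hinj : Function.Injective (labelFiber label) := by
    intro l l' heq
    obtain ⟨x, hx⟩ := hnonempty l
    exact (mem_labelFiber.1 hx).symm.trans (mem_labelFiber.1 (heq ▸ hx))
  refine ⟨Finset.card_image_of_injective _ hinj, ?_, ?_, fun x => ?_, ?_⟩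
  · simpa using hnonempty
  · simp only [Finset.forall_mem_image, Finset.disjoint_left, mem_labelFiber]
    rintro l - l' - hne x rfl rfl
    exact hne rfl
  · exact ⟨_, Finset.mem_image_of_mem _ (Finset.mem_univ (label x)), mem_labelFiber.2 rfl⟩
  · simpa using hconn

theorem SatisfyingFor.one_lt_card_wins (hsat : SatisfyingFor χ p P) {D : Finset V} (hD : D ∈ P)
    (hne : D.Nonempty) (hDp : ∀ x ∈ D, χ x ≠ p) : 1 < (P.filter fun D => winsIn χ p D).card := by
  obtain ⟨c, hc⟩ := exists_leadsIn χ hne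
  obtain ⟨x, hx, rfl⟩ := hc.exists_mem hne
  have hpos : 0 < (P.filter fun D => leadsIn χ (χ x) D).card :=
    Finset.card_pos.2 ⟨D, Finset.mem_filter.2 ⟨hD, hc⟩⟩
  have hlt := hsat (χ x) (hDp x hx)
  omega

theorem satisfyingFor_of_leadsIn_unique {D₁ D₂ : Finset V} (h₁ : D₁ ∈ P) (h₂ : D₂ ∈ P)
    (hne : D₁ ≠ D₂) (hwin₁ : winsIn χ p D₁) (hwin₂ : winsIn χ p D₂)
    (hlead : ∀ c, c ≠ p → ∀ D ∈ P, ∀ D' ∈ P, leadsIn χ c D → leadsIn χ c D' → D = D') :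
    SatisfyingFor χ p P := by
  intro c hc
  have hle : (P.filter fun D => leadsIn χ c D).card ≤ 1 := by
    refine Finset.card_le_one.2 fun D hD D' hD' => ?_
    rw [Finset.mem_filter] at hD hD'
    exact hlead c hc D hD.1 D' hD'.1 hD.2 hD'.2
  have hlt : 1 < (P.filter fun D => winsIn χ p D).card :=
    Finset.one_lt_card.2 ⟨D₁, Finset.mem_filter.2 ⟨h₁, hwin₁⟩, D₂,
      Finset.mem_filter.2 ⟨h₂, hwin₂⟩, hne⟩
  omega

-- A winning district without `z`, or with a `p`-voter besides `z`, would leave more winning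
-- districts than remaining `p`-voters.
theorem IsDistrictPartition.singleton_mem_of_card_le_card_wins (hP : IsDistrictPartition G k P)
    {T : Finset V} (hT : ∀ x, x ∈ T ↔ χ x = p)
    (hcard : T.card ≤ (P.filter fun D => winsIn χ p D).card) {z : V} (hz : z ∈ T) :
    {z} ∈ P := by
  set W := P.filter fun D => winsIn χ p D
  have hmeets {D : Finset V} (hD : D ∈ W) : ∃ x ∈ T, x ∈ D := by
    obtain ⟨hDP, hwin⟩ := Finset.mem_filter.1 hD
    obtain ⟨x, hx, hxp⟩ := hwin.leadsIn.exists_mem (hP.2.1 D hDP)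
    exact ⟨x, (hT x).2 hxp, hx⟩
  have havoid {x : V} (hx : x ∈ T) : ¬ ∀ D ∈ W, ∃ y ∈ T.erase x, y ∈ D := fun h =>
    (Finset.card_erase_lt_of_mem hx).not_ge <|
      hcard.trans (hP.card_le_card_of_forall_exists_mem (Finset.filter_subset _ _) h)
  obtain ⟨D, hD, hzD⟩ : ∃ D ∈ W, z ∈ D := by
    by_contra! hnot
    refine havoid hz fun D hD => ?_
    obtain ⟨x, hx, hxD⟩ := hmeets hD
    exact ⟨x, Finset.mem_erase.2 ⟨fun hxz => hnot D hD (hxz ▸ hxD), hx⟩, hxD⟩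
  obtain ⟨hDP, hwin⟩ := Finset.mem_filter.1 hD
  suffices D = {z} from this ▸ hDP
  refine hwin.eq_singleton hzD fun y hy hyp => ?_
  by_contra hne
  refine havoid ((hT y).2 hyp) fun D' hD' => ?_
  by_cases hyD' : y ∈ D'
  · obtain rfl := hP.eq_of_mem hDP (Finset.mem_filter.1 hD').1 hy hyD'
    exact ⟨z, Finset.mem_erase.2 ⟨Ne.symm hne, hz⟩, hzD⟩
  · obtain ⟨x, hx, hxD'⟩ := hmeets hD'
    exact ⟨x, Finset.mem_erase.2 ⟨fun hxy => hyD' (hxy ▸ hxD'), hx⟩, hxD'⟩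

end DistrictPartition

section InducedConnectivity

variable {V : Type*} {G : SimpleGraph V} {D : Set V}

theorem exists_adj_of_connected_induce (hD : (G.induce D).Connected) {A : Set V} {a b : V}
    (ha : a ∈ D) (hb : b ∈ D) (haA : a ∈ A) (hbA : b ∉ A) :
    ∃ x ∈ D, ∃ y ∈ D, x ∈ A ∧ y ∉ A ∧ G.Adj x y := by
  obtain ⟨walk⟩ := hD.preconnected ⟨a, ha⟩ ⟨b, hb⟩
  obtain ⟨d, -, hfst, hsnd⟩ := walk.exists_boundary_dart {z | (z : V) ∈ A} haA hbA
  exact ⟨d.fst, d.fst.2, d.snd, d.snd.2, hfst, hsnd, d.adj⟩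

theorem connected_induce_of_forall_exists_adj_lt {α : Type*} [Preorder α] [WellFoundedLT α]
    (height : V → α) {b : V} (hb : b ∈ D)
    (hdesc : ∀ x ∈ D, x ≠ b → ∃ y ∈ D, G.Adj x y ∧ height y < height x) :
    (G.induce D).Connected := by
  have hreach (x : V) : ∀ hx : x ∈ D, (G.induce D).Reachable ⟨x, hx⟩ ⟨b, hb⟩ := by
    induction x using (InvImage.wf height wellFounded_lt).induction with
    | _ x ih =>
      intro hx
      rcases eq_or_ne x b with rfl | hne
      · exact .refl _
      · obtain ⟨y, hy, hadj, hlt⟩ := hdesc x hx hne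
        have hadj' : (G.induce D).Adj ⟨x, hx⟩ ⟨y, hy⟩ := hadj
        exact hadj'.reachable.trans (ih y hlt hy)
  have : Nonempty D := ⟨⟨b, hb⟩⟩
  exact ⟨fun x y => (hreach x x.2).trans (hreach y y.2).symm⟩

end InducedConnectivity

theorem exists_forall_mem_exists_eq_of_card_le {α ι : Type*} [Fintype ι] {X : Finset α}
    (hX : X.Nonempty) (hcard : X.card ≤ Fintype.card ι) : ∃ f : ι → α, ∀ x ∈ X, ∃ i, f i = x := by
  have : Nonempty X := hX.to_subtype
  obtain ⟨e⟩ := Function.Embedding.nonempty_of_card_le (α := X) (β := ι) (by simpa using hcard)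
  exact ⟨fun i => (Function.invFun e i : X), fun x hx =>
    ⟨e ⟨x, hx⟩, congrArg Subtype.val (Function.leftInverse_invFun e.injective ⟨x, hx⟩)⟩⟩

theorem strictMonoOn_card_filter_lt {α : Type*} [Preorder α] [DecidableLT α] (A : Finset α) :
    StrictMonoOn (fun a => (A.filter fun b => b < a).card) (A : Set α) := by
  intro a ha b _ hab
  refine Finset.card_lt_card ((Finset.ssubset_iff_of_subset ?_).2 ⟨a, ?_, ?_⟩)
  · exact Finset.monotone_filter_right _ fun _ _ hlt => hlt.trans hab
  · exact Finset.mem_filter.2 ⟨ha, hab⟩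
  · simp

theorem card_filter_lt_lt_card {α : Type*} [Preorder α] [DecidableLT α] {A : Finset α} {a : α}
    (ha : a ∈ A) :
    (A.filter fun b => b < a).card < A.card :=
  Finset.card_lt_card (Finset.filter_ssubset.2 ⟨a, ha, lt_irrefl a⟩)

namespace SubdividedStar

section Offset

variable {n : ℕ} {A : Finset (Fin n)} {j : Fin n}

/-- The position inside the group `g_i` of `x_i` (encoded as `none`) and of `v_i^j` (encoded as
`some j`), counted from `0`, where `A` is the set `S_i`. -/
def offset (A : Finset (Fin n)) : Option (Fin n) → ℕ
  | none => n - A.card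
  | some j => if j ∈ A then n - A.card + 1 + (A.filter fun j' => j' < j).card
      else (Aᶜ.filter fun j' => j' < j).card

theorem offset_none_lt_offset_some (hj : j ∈ A) : offset A none < offset A (some j) := by
  simp only [offset, if_pos hj]
  omega

theorem offset_some_lt_offset_none (hj : j ∉ A) : offset A (some j) < offset A none := by
  simpa only [offset, if_neg hj, Finset.card_compl, Fintype.card_fin] using
    card_filter_lt_lt_card (Finset.mem_compl.2 hj)

theorem offset_le (A : Finset (Fin n)) (o : Option (Fin n)) : offset A o ≤ n := by
  have hcard : A.card ≤ n := card_finset_fin_le A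
  rcases o with _ | j
  · exact Nat.sub_le _ _
  · by_cases hj : j ∈ A
    · have hrank := card_filter_lt_lt_card hj
      simp only [offset, if_pos hj]
      omega
    · exact (offset_some_lt_offset_none hj).le.trans (Nat.sub_le _ _)

theorem offset_injective (A : Finset (Fin n)) : Function.Injective (offset A) := by
  have hnone (j : Fin n) : offset A none ≠ offset A (some j) := by
    by_cases hj : j ∈ A
    · exact (offset_none_lt_offset_some hj).ne
    · exact (offset_some_lt_offset_none hj).ne'
  have hcross {j k : Fin n} (hj : j ∈ A) (hk : k ∉ A) :
      offset A (some k) ≠ offset A (some j) :=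
    ((offset_some_lt_offset_none hk).trans (offset_none_lt_offset_some hj)).ne
  rintro (_ | j) (_ | k) heq
  · rfl
  · exact (hnone k heq).elim
  · exact (hnone j heq.symm).elim
  · by_cases hj : j ∈ A <;> by_cases hk : k ∈ A
    · simp only [offset, if_pos hj, if_pos hk, Nat.add_left_cancel_iff] at heq
      exact congrArg some ((strictMonoOn_card_filter_lt A).injOn hj hk heq)
    · exact (hcross hj hk heq.symm).elim
    · exact (hcross hk hj heq).elim
    · simp only [offset, if_neg hj, if_neg hk] at heq
      exact congrArg some ((strictMonoOn_card_filter_lt Aᶜ).injOn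
        (by simpa using hj) (by simpa using hk) heq)

theorem exists_offset_eq (A : Finset (Fin n)) {k : ℕ} (hk : k ≤ n) : ∃ o, offset A o = k := by
  let toFin (o : Option (Fin n)) : Fin (n + 1) := ⟨offset A o, Nat.lt_succ_of_le (offset_le A o)⟩
  have hinj : toFin.Injective := fun o o' heq => offset_injective A (Fin.ext_iff.1 heq)
  have hbij : toFin.Bijective :=
    (Fintype.bijective_iff_injective_and_card toFin).2 ⟨hinj, by simp⟩
  obtain ⟨o, ho⟩ := hbij.surjective ⟨k, Nat.lt_succ_of_le hk⟩
  exact ⟨o, Fin.ext_iff.1 ho⟩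

end Offset

section Slot

variable {n m : ℕ} (S : Fin m → Finset (Fin n))

/-- The position on a selection branch of `x_i` (encoded as `none`) and of `v_i^j` (encoded as
`some j`). -/
def slot (i : Fin m) (o : Option (Fin n)) : ℕ :=
  n + (i : ℕ) * (n + 1) + offset (S i) o

variable {S} {i i' : Fin m} {o o' : Option (Fin n)}

theorem le_slot : n ≤ slot S i o :=
  (Nat.le_add_right _ _).trans (Nat.le_add_right _ _)

theorem slot_lt_of_lt {b : ℕ} (h : (i : ℕ) < b) : slot S i o < n + b * (n + 1) := by
  have hoffset := offset_le (S i) o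
  have hblock := Nat.mul_le_mul_right (n + 1) (Nat.succ_le_of_lt h)
  rw [Nat.succ_mul] at hblock
  unfold slot
  omega

theorem slot_lt : slot S i o < n + m * (n + 1) :=
  slot_lt_of_lt i.2

theorem slot_lt_slot (h : i < i') : slot S i o < slot S i' o' :=
  (slot_lt_of_lt h).trans_le (Nat.le_add_right _ _)

theorem slot_eq_slot_iff : slot S i o = slot S i' o' ↔ i = i' ∧ o = o' := by
  refine ⟨fun heq => ?_, by rintro ⟨rfl, rfl⟩; rfl⟩
  rcases lt_trichotomy i i' with hlt | rfl | hlt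
  · exact absurd heq (slot_lt_slot hlt).ne
  · exact ⟨rfl, offset_injective (S i) (Nat.add_left_cancel heq)⟩
  · exact absurd heq (slot_lt_slot hlt).ne'

theorem slot_none_lt_slot_some {j : Fin n} (hj : j ∈ S i) : slot S i none < slot S i (some j) :=
  Nat.add_lt_add_left (offset_none_lt_offset_some hj) _

theorem slot_some_lt_slot_none {j : Fin n} (hj : j ∉ S i) : slot S i (some j) < slot S i none :=
  Nat.add_lt_add_left (offset_some_lt_offset_none hj) _

theorem exists_slot_eq (S : Fin m → Finset (Fin n)) {k : ℕ} (hk : n ≤ k)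
    (hk' : k < n + m * (n + 1)) : ∃ i o, slot S i o = k := by
  have hdiv : (k - n) / (n + 1) < m := by
    rw [Nat.div_lt_iff_lt_mul (by omega)]
    omega
  have hmod : (k - n) % (n + 1) < n + 1 := Nat.mod_lt _ (by omega)
  obtain ⟨o, ho⟩ := exists_offset_eq (S ⟨_, hdiv⟩) (Nat.le_of_lt_succ hmod)
  refine ⟨⟨_, hdiv⟩, o, ?_⟩
  have hdivmod := Nat.div_add_mod' (k - n) (n + 1)
  simp only [slot, ho]
  omega

end Slot

section Position

variable {n m t : ℕ} {S : Fin m → Finset (Fin n)}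

theorem posS_x (s : Fin t) (i : Fin m) :
    posS S (VS.x s i) = some (2 + (s : ℕ), slot S i none) := rfl

theorem posS_v (s : Fin t) (i : Fin m) (j : Fin n) :
    posS S (VS.v s i j) = some (2 + (s : ℕ), slot S i (some j)) := rfl

theorem posS_injective (S : Fin m → Finset (Fin n)) : Function.Injective (posS (t := t) S) := by
  intro a b h
  have hlower (i o) : n ≤ slot S i o := le_slot
  have hupper (i o) : slot S i o < n + m * (n + 1) := slot_lt
  cases a <;> cases b <;> (try rfl) <;> (try simp only [posS_x, posS_v] at h) <;>
    simp only [posS, Option.some.injEq, Prod.mk.injEq, reduceCtorEq, Nat.add_left_cancel_iff,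
      Fin.val_inj, slot_eq_slot_iff] at h <;>
    grind

theorem exists_posS_eq_of_lt (S : Fin m → Finset (Fin n)) (s : Fin t) {k : ℕ}
    (hk : k < n + m * (n + 1) + (m + 1)) : ∃ z : VS n m t, posS S z = some (2 + (s : ℕ), k) := by
  by_cases hinitial : k < n
  · exact ⟨.v0 s ⟨k, hinitial⟩, rfl⟩
  by_cases hgroup : k < n + m * (n + 1)
  · obtain ⟨i, _ | j, rfl⟩ := exists_slot_eq S (not_lt.1 hinitial) hgroup
    · exact ⟨.x s i, rfl⟩
    · exact ⟨.v s i j, rfl⟩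
  · refine ⟨.y s ⟨k - (n + m * (n + 1)), by omega⟩, ?_⟩
    simp only [posS, Option.some.injEq, Prod.mk.injEq, true_and]
    omega

end Position

section Tree

variable {n m t : ℕ} (S : Fin m → Finset (Fin n))

/-- `y` is the neighbour of `x` on the way from `x` to the root. -/
def IsParent (y x : VS n m t) : Prop :=
  (y = VS.root ∧ ∃ br, posS S x = some (br, 0)) ∨
    ∃ br k, posS S y = some (br, k) ∧ posS S x = some (br, k + 1)

/-- The vertices of branch `br` at position `k` or farther from the root. -/
def branchTail (br k : ℕ) : Set (VS n m t) :=
  {z | ∃ l, k ≤ l ∧ posS S z = some (br, l)}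

variable {S} {x y z : VS n m t} {br k : ℕ}

theorem mem_branchTail_iff {br' l : ℕ} (hz : posS S z = some (br', l)) :
    z ∈ branchTail S br k ↔ br' = br ∧ k ≤ l := by
  simp [branchTail, hz, and_comm]

theorem mem_branchTail {l : ℕ} (hz : posS S z = some (br, l)) (hl : k ≤ l) :
    z ∈ branchTail S br k :=
  ⟨l, hl, hz⟩

theorem notMem_branchTail {br' l : ℕ} (hz : posS S z = some (br', l)) (h : br' ≠ br ∨ l < k) :
    z ∉ branchTail S br k := by
  rw [mem_branchTail_iff hz]
  omega

theorem root_notMem_branchTail : VS.root ∉ branchTail (t := t) S br k := by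
  rintro ⟨l, -, h⟩
  cases h

theorem IsParent.mem_branchTail (h : IsParent S y x) (hy : y ∈ branchTail S br k) :
    x ∈ branchTail S br k := by
  obtain ⟨l, hl, hyl⟩ := hy
  rcases h with ⟨rfl, -⟩ | ⟨br', l', hyl', hxl'⟩
  · cases hyl
  · obtain ⟨rfl, rfl⟩ := Prod.mk.inj (Option.some.inj (hyl.symm.trans hyl'))
    exact ⟨l + 1, hl.trans l.le_succ, hxl'⟩

theorem IsParent.adj (h : IsParent S y x) : (GS S).Adj x y := by
  refine (SimpleGraph.fromRel_adj _ _ _).2 ⟨?_, Or.inr h⟩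
  rintro rfl
  rcases h with ⟨rfl, br, hroot⟩ | ⟨br, k, hk, hk'⟩
  · cases hroot
  · simp [hk] at hk'

theorem isParent_or_isParent_of_adj (h : (GS S).Adj x y) : IsParent S x y ∨ IsParent S y x :=
  ((SimpleGraph.fromRel_adj _ _ _).1 h).2

theorem isParent_of_mem_branchTail_of_adj (hx : x ∈ branchTail S br k)
    (hy : y ∉ branchTail S br k) (h : (GS S).Adj x y) :
    posS S x = some (br, k) ∧ IsParent S y x := by
  have hparent : IsParent S y x := (isParent_or_isParent_of_adj h).resolve_left fun hchild =>
    hy (hchild.mem_branchTail hx)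
  refine ⟨?_, hparent⟩
  obtain ⟨l, hl, hxl⟩ := hx
  rcases hparent with ⟨-, br', hx0⟩ | ⟨br', l', hyl', hxl'⟩
  · obtain ⟨rfl, rfl⟩ := Prod.mk.inj (Option.some.inj (hxl.symm.trans hx0))
    rwa [Nat.le_zero.1 hl]
  · obtain ⟨rfl, rfl⟩ := Prod.mk.inj (Option.some.inj (hxl.symm.trans hxl'))
    have hlt : l' < k := not_le.1 fun hle => hy (mem_branchTail hyl' hle)
    rwa [show k = l' + 1 by omega]

section Connected

variable {D : Set (VS n m t)} {a b : VS n m t}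

theorem exists_isParent_of_connected (hD : ((GS S).induce D).Connected) (ha : a ∈ D) (hb : b ∈ D)
    (hatail : a ∈ branchTail S br k) (hbtail : b ∉ branchTail S br k) :
    ∃ x ∈ D, ∃ y ∈ D, posS S x = some (br, k) ∧ IsParent S y x := by
  obtain ⟨x, hx, y, hy, hxtail, hytail, hadj⟩ :=
    exists_adj_of_connected_induce hD ha hb hatail hbtail
  exact ⟨x, hx, y, hy, isParent_of_mem_branchTail_of_adj hxtail hytail hadj⟩

theorem mem_of_connected (hD : ((GS S).induce D).Connected) (ha : a ∈ D) (hb : b ∈ D)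
    (hatail : a ∈ branchTail S br k) (hbtail : b ∉ branchTail S br k)
    (hz : posS S z = some (br, k)) : z ∈ D := by
  obtain ⟨x, hx, -, -, hxk, -⟩ := exists_isParent_of_connected hD ha hb hatail hbtail
  rwa [posS_injective S (hz.trans hxk.symm)]

theorem mem_of_connected_of_root_mem (hD : ((GS S).induce D).Connected) (hroot : VS.root ∈ D)
    (ha : a ∈ D) {l : ℕ} (hal : posS S a = some (br, l)) (hz : posS S z = some (br, k))
    (hkl : k ≤ l) : z ∈ D :=
  mem_of_connected hD ha hroot (mem_branchTail hal hkl) root_notMem_branchTail hz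

theorem branch_eq_of_connected_of_root_notMem (hD : ((GS S).induce D).Connected)
    (hroot : VS.root ∉ D) (ha : a ∈ D) (hb : b ∈ D) {br' l : ℕ} (hak : posS S a = some (br, k))
    (hbl : posS S b = some (br', l)) : br' = br := by
  by_contra hne
  obtain ⟨x, -, y, hy, hx0, hparent⟩ := exists_isParent_of_connected hD ha hb
    (mem_branchTail hak k.zero_le) (notMem_branchTail hbl (Or.inl hne))
  rcases hparent with ⟨rfl, -⟩ | ⟨br'', k', -, hxk'⟩
  · exact hroot hy
  · simp [hx0] at hxk'

end Connected

theorem exists_isParent_of_posS_eq_selection {s : Fin t} (hx : posS S x = some (2 + (s : ℕ), k))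
    (hk : k < n + m * (n + 1) + (m + 1)) : ∃ y, IsParent S y x := by
  rcases k with _ | k
  · exact ⟨.root, Or.inl ⟨rfl, _, hx⟩⟩
  · obtain ⟨y, hy⟩ := exists_posS_eq_of_lt S s (Nat.lt_of_succ_lt hk)
    exact ⟨y, Or.inr ⟨_, k, hy, hx⟩⟩

theorem exists_isParent (S : Fin m → Finset (Fin n)) (hx : x ≠ VS.root) : ∃ y, IsParent S y x := by
  cases x with
  | root => exact absurd rfl hx
  | c1 => exact ⟨.root, Or.inl ⟨rfl, 0, rfl⟩⟩
  | c2 => exact ⟨.c1, Or.inr ⟨0, 0, rfl, rfl⟩⟩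
  | u j =>
    obtain ⟨_ | j, hj⟩ := j
    · exact ⟨.c2, Or.inr ⟨0, 1, rfl, rfl⟩⟩
    · exact ⟨.u ⟨j, by omega⟩, Or.inr ⟨0, 2 + j, rfl, rfl⟩⟩
  | w i =>
    obtain ⟨_ | i, hi⟩ := i
    · exact ⟨.root, Or.inl ⟨rfl, 1, rfl⟩⟩
    · exact ⟨.w ⟨i, by omega⟩, Or.inr ⟨1, i, rfl, rfl⟩⟩
  | v0 s j => exact exists_isParent_of_posS_eq_selection rfl (by omega)
  | x s i => exact exists_isParent_of_posS_eq_selection (posS_x s i) (slot_lt.trans (by omega))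
  | v s i j => exact exists_isParent_of_posS_eq_selection (posS_v s i j) (slot_lt.trans (by omega))
  | y s i => exact exists_isParent_of_posS_eq_selection rfl (by omega)

theorem connected_induce_of_forall_isParent_mem {D : Set (VS n m t)} {b : VS n m t} (hb : b ∈ D)
    (h : ∀ x ∈ D, x ≠ b → x ≠ VS.root ∧ ∀ y, IsParent S y x → y ∈ D) :
    ((GS S).induce D).Connected := by
  refine connected_induce_of_forall_exists_adj_lt
    (fun z => (posS S z).elim 0 fun pos => pos.2 + 1) hb fun x hx hne => ?_
  obtain ⟨y, hparent⟩ := exists_isParent S (h x hx hne).1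
  refine ⟨y, (h x hx hne).2 y hparent, hparent.adj, ?_⟩
  rcases hparent with ⟨rfl, br, hx0⟩ | ⟨br, k, hyk, hxk⟩
  · have hroot : posS S (VS.root : VS n m t) = none := rfl
    simp [hroot, hx0]
  · simp [hyk, hxk]

theorem connected_induce_branchTail (hz : posS S z = some (br, k)) :
    ((GS S).induce (branchTail (t := t) S br k)).Connected := by
  refine connected_induce_of_forall_isParent_mem (mem_branchTail hz le_rfl) fun x hx hne => ⟨?_, ?_⟩
  · rintro rfl
    exact root_notMem_branchTail hx
  · intro y hparent
    by_contra hy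
    obtain ⟨hxk, -⟩ := isParent_of_mem_branchTail_of_adj hx hy hparent.adj
    exact hne (posS_injective S (hxk.trans hz.symm))

end Tree

section VertexFamilies

variable {n m t : ℕ}

/-- The voters of `a_j` on the selection branches: `v_0^j` and `v_{i+1}^j` of branch `s` have the
indices `(s, 0)` and `(s, i + 1)`, so that they can be compared index by index with `qVertex` and
with the vertices `y_0, …, y_m` of branch `s`. -/
def aVertex (j : Fin n) (k : Fin t × Fin (m + 1)) : VS n m t :=
  Fin.cases (.v0 k.1 j) (fun i => .v k.1 i j) k.2

/-- The voters of `q`: `x_{i+1}` of branch `s` has the index `(s, i + 1)`, while the `t` indices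
`(s, 0)` enumerate the root and `w_1, …, w_{t-1}`. -/
def qVertex (k : Fin t × Fin (m + 1)) : VS n m t :=
  Fin.cases (if h : (k.1 : ℕ) = 0 then .root else .w ⟨k.1 - 1, by omega⟩) (fun i => .x k.1 i) k.2

theorem chiS_aVertex (j : Fin n) (k : Fin t × Fin (m + 1)) : chiS (aVertex j k) = .a j := by
  obtain ⟨s, i⟩ := k
  cases i using Fin.cases <;> rfl

theorem chiS_qVertex (k : Fin t × Fin (m + 1)) : chiS (qVertex k : VS n m t) = .q := by
  obtain ⟨s, i⟩ := k
  cases i using Fin.cases with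
  | zero => simp only [qVertex, Fin.cases_zero]; split <;> rfl
  | succ i => rfl

theorem aVertex_injective (j : Fin n) : (aVertex (m := m) (t := t) j).Injective := by
  rintro ⟨s, i⟩ ⟨s', i'⟩ heq
  cases i using Fin.cases <;> cases i' using Fin.cases <;> simp_all [aVertex]

theorem qVertex_injective : (qVertex (n := n) (m := m) (t := t)).Injective := by
  rintro ⟨s, i⟩ ⟨s', i'⟩ heq
  cases i using Fin.cases <;> cases i' using Fin.cases <;>
    simp only [qVertex, Fin.cases_zero, Fin.cases_succ] at heq <;> grind

theorem eq_u_or_exists_aVertex_eq_of_chiS_eq {z : VS n m t} {j : Fin n}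
    (hz : chiS z = .a j) : z = .u j ∨ ∃ k, aVertex j k = z := by
  cases z <;> cases hz
  case u => exact Or.inl rfl
  case v0 s => exact Or.inr ⟨(s, 0), rfl⟩
  case v s i => exact Or.inr ⟨(s, i.succ), rfl⟩

theorem exists_qVertex_eq_of_chiS_eq (ht : 1 ≤ t) {z : VS n m t} (hz : chiS z = .q) :
    ∃ k, qVertex k = z := by
  cases z <;> cases hz
  case root => exact ⟨(⟨0, ht⟩, 0), rfl⟩
  case w i => exact ⟨(⟨i + 1, by omega⟩, 0), rfl⟩
  case x s i => exact ⟨(s, i.succ), rfl⟩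

theorem exists_y_eq_of_chiS_eq {z : VS n m t} {s : Fin t} (hz : chiS z = .b s) :
    ∃ i, VS.y s i = z := by
  cases z <;> cases hz
  exact ⟨_, rfl⟩

theorem mem_c1_c2_iff {z : VS n m t} : z ∈ ({.c1, .c2} : Finset (VS n m t)) ↔ chiS z = .p := by
  cases z <;> simp [chiS]

theorem card_c1_c2 : ({.c1, .c2} : Finset (VS n m t)).card = 2 :=
  Finset.card_pair (by simp)

theorem exists_u_eq_of_mem_branchTail {S : Fin m → Finset (Fin n)} {z : VS n m t}
    (hz : z ∈ branchTail S 0 2) : ∃ j, VS.u j = z := by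
  cases z with
  | u j => exact ⟨j, rfl⟩
  | root => exact absurd hz root_notMem_branchTail
  | _ =>
    obtain ⟨hbranch, hposition⟩ := (mem_branchTail_iff rfl).1 hz
    omega

end VertexFamilies

section CoverOfSolution

variable {n m t : ℕ} {S : Fin m → Finset (Fin n)} {P : Finset (Finset (VS n m t))}
  {D : Finset (VS n m t)} {z : VS n m t} {c : CS n t} {s : Fin t} {j : Fin n}

variable (S P) in
/-- `P` certifies that the gerrymandering instance built from `S` is a yes-instance. -/
def IsSolution : Prop :=
  IsDistrictPartition (GS S) (t + 4) P ∧ SatisfyingFor chiS CS.p P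

theorem IsSolution.singleton_mem (h : IsSolution S P) (hz : chiS z = .p) : {z} ∈ P := by
  obtain ⟨D, hD, hDp⟩ : ∃ D ∈ P, ∀ x ∈ D, chiS x ≠ .p := by
    by_contra! hmeets
    have hle := h.1.card_le_card_of_forall_exists_mem (T := {.c1, .c2}) subset_rfl fun D hD =>
      (hmeets D hD).imp fun x hx => ⟨mem_c1_c2_iff.2 hx.2, hx.1⟩
    rw [h.1.1, card_c1_c2] at hle
    omega
  have hwins := h.2.one_lt_card_wins hD (h.1.2.1 D hD) hDp
  refine h.1.singleton_mem_of_card_le_card_wins (fun _ => mem_c1_c2_iff) ?_ (mem_c1_c2_iff.2 hz)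
  rwa [card_c1_c2]

theorem IsSolution.eq_of_leadsIn (h : IsSolution S P) (hc : c ≠ .p) {D' : Finset (VS n m t)}
    (hD : D ∈ P) (hD' : D' ∈ P) (hlead : leadsIn chiS c D) (hlead' : leadsIn chiS c D') :
    D = D' := by
  have hwins : (P.filter fun D => winsIn chiS CS.p D).card ≤ 2 := by
    rw [← card_c1_c2 (n := n) (m := m) (t := t)]
    refine h.1.card_le_card_of_forall_exists_mem (Finset.filter_subset _ _) fun D hD => ?_
    obtain ⟨hDP, hwin⟩ := Finset.mem_filter.1 hD
    exact (hwin.leadsIn.exists_mem (h.1.2.1 D hDP)).imp fun x hx => ⟨mem_c1_c2_iff.2 hx.2, hx.1⟩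
  have hleads : (P.filter fun D => leadsIn chiS c D).card ≤ 1 :=
    Nat.le_of_lt_succ ((h.2 c hc).trans_le hwins)
  exact Finset.card_le_one.1 hleads D (Finset.mem_filter.2 ⟨hD, hlead⟩) D'
    (Finset.mem_filter.2 ⟨hD', hlead'⟩)

theorem IsSolution.mem_branchTail_of_u_mem (h : IsSolution S P) (hD : D ∈ P) (hu : .u j ∈ D)
    (hz : z ∈ D) : z ∈ branchTail S 0 2 := by
  by_contra htail
  obtain ⟨x, -, y, hy, hx2, hparent⟩ := exists_isParent_of_connected (h.1.2.2.2.2 D hD) hu hz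
    (mem_branchTail rfl (Nat.le_add_right 2 j)) htail
  have hyc2 : y = .c2 := by
    rcases hparent with ⟨-, br, hx0⟩ | ⟨br, k, hyk, hxk⟩
    · simp [hx2] at hx0
    · obtain ⟨rfl, hk⟩ := Prod.mk.inj (Option.some.inj (hx2.symm.trans hxk))
      obtain rfl : k = 1 := by omega
      exact posS_injective S hyk
  subst hyc2
  obtain rfl := h.1.eq_of_mem hD (h.singleton_mem rfl) hy (Finset.mem_singleton_self _)
  simp at hu

theorem IsSolution.leadsIn_a_iff (h : IsSolution S P) (hD : D ∈ P) :
    leadsIn chiS (.a j) D ↔ .u j ∈ D := by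
  have hlead {D : Finset (VS n m t)} (hD : D ∈ P) (hu : .u j ∈ D) : leadsIn chiS (.a j) D := by
    refine leadsIn_of_injOn (χ := chiS) (fun x hx y hy hxy => ?_) hu
    obtain ⟨i, rfl⟩ := exists_u_eq_of_mem_branchTail (h.mem_branchTail_of_u_mem hD hu hx)
    obtain ⟨k, rfl⟩ := exists_u_eq_of_mem_branchTail (h.mem_branchTail_of_u_mem hD hu hy)
    exact congrArg VS.u (CS.a.inj hxy)
  refine ⟨fun ha => ?_, hlead hD⟩
  obtain ⟨D', hD', hu⟩ := h.1.2.2.2.1 (.u j)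
  rwa [h.eq_of_leadsIn (by simp) hD hD' ha (hlead hD' hu)]

theorem IsSolution.not_leadsIn_a (h : IsSolution S P) (hD : D ∈ P) (hz : z ∈ D)
    (hbranch : z ∉ branchTail S 0 0) : ¬ leadsIn chiS (.a j) D := fun hlead => by
  obtain ⟨l, -, hl⟩ := h.mem_branchTail_of_u_mem hD ((h.leadsIn_a_iff hD).1 hlead) hz
  exact hbranch (mem_branchTail hl l.zero_le)

theorem IsSolution.leadsIn_q_or_exists_leadsIn_b (h : IsSolution S P) (hD : D ∈ P) (hz : z ∈ D)
    (hbranch : z ∉ branchTail S 0 0) : leadsIn chiS .q D ∨ ∃ s, leadsIn chiS (.b s) D := by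
  obtain ⟨c, hc⟩ := exists_leadsIn chiS ⟨z, hz⟩
  cases c with
  | q => exact Or.inl hc
  | b s => exact Or.inr ⟨s, hc⟩
  | a j => exact absurd hc (h.not_leadsIn_a hD hz hbranch)
  | p =>
    obtain ⟨x, hx, hxp⟩ := hc.exists_mem ⟨z, hz⟩
    obtain rfl := h.1.eq_of_mem hD (h.singleton_mem hxp) hx (Finset.mem_singleton_self x)
    obtain rfl := Finset.mem_singleton.1 hz
    cases z <;> cases hxp <;> exact absurd (mem_branchTail rfl (Nat.zero_le _)) hbranch

theorem votes_b_le_votes_a (hD : ((GS S).induce (D : Set (VS n m t))).Connected)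
    (hv0 : .v0 s j ∈ D) : votes chiS (.b s) D ≤ votes chiS (.a j) D := by
  refine votes_le_votes_of_forall_imp (f := VS.y s) (g := fun i => aVertex j (s, i))
    (fun x _ => exists_y_eq_of_chiS_eq) ((aVertex_injective j).comp (Prod.mk_right_injective s))
    (fun i => chiS_aVertex j _) fun i hy => ?_
  cases i using Fin.cases with
  | zero => exact hv0
  | succ i =>
    exact mem_of_connected hD hy hv0
      (mem_branchTail rfl (slot_lt.le.trans (Nat.le_add_right _ _)))
      (notMem_branchTail rfl (Or.inr (j.2.trans_le le_slot))) (posS_v s i j)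

theorem v0_notMem_branchTail_zero : VS.v0 s j ∉ branchTail S 0 0 :=
  notMem_branchTail rfl (Or.inl (by omega))

theorem IsSolution.not_leadsIn_b (h : IsSolution S P) (hD : D ∈ P) (hv0 : .v0 s j ∈ D) :
    ¬ leadsIn chiS (.b s) D := fun hlead =>
  h.not_leadsIn_a hD hv0 v0_notMem_branchTail_zero
    (hlead.of_votes_le (votes_b_le_votes_a (h.1.2.2.2.2 D hD) hv0))

theorem IsSolution.leadsIn_q_of_root_mem (h : IsSolution S P) (hn : 1 ≤ n) (hD : D ∈ P)
    (hroot : .root ∈ D) : leadsIn chiS .q D := by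
  refine (h.leadsIn_q_or_exists_leadsIn_b hD hroot root_notMem_branchTail).resolve_right ?_
  rintro ⟨s, hb⟩
  obtain ⟨_, hy, hys⟩ := hb.exists_mem ⟨_, hroot⟩
  obtain ⟨i, rfl⟩ := exists_y_eq_of_chiS_eq hys
  have hv0 : .v0 s ⟨0, hn⟩ ∈ D := mem_of_connected_of_root_mem (h.1.2.2.2.2 D hD) hroot hy
    rfl rfl (Nat.zero_le _)
  exact h.not_leadsIn_b hD hv0 hb

theorem IsSolution.v0_mem_of_root_mem (h : IsSolution S P) (hn : 1 ≤ n) (hD : D ∈ P)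
    (hroot : .root ∈ D) : .v0 s j ∈ D := by
  obtain ⟨D', hD', hv0⟩ := h.1.2.2.2.1 (.v0 s j)
  suffices D' = D from this ▸ hv0
  rcases h.leadsIn_q_or_exists_leadsIn_b hD' hv0 v0_notMem_branchTail_zero with hq | ⟨s', hb⟩
  · exact h.eq_of_leadsIn (by simp) hD' hD hq (h.leadsIn_q_of_root_mem hn hD hroot)
  · by_contra hne
    have hroot' : .root ∉ D' := fun hroot' => hne (h.1.eq_of_mem hD' hD hroot' hroot)
    obtain ⟨_, hy, hys⟩ := hb.exists_mem ⟨_, hv0⟩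
    obtain ⟨i, rfl⟩ := exists_y_eq_of_chiS_eq hys
    have hbranch : 2 + (s' : ℕ) = 2 + s :=
      branch_eq_of_connected_of_root_notMem (h.1.2.2.2.2 D' hD') hroot' hv0 hy rfl rfl
    obtain rfl : s' = s := by omega
    exact h.not_leadsIn_b hD' hv0 hb

theorem IsSolution.exists_x_mem_and_v_notMem (h : IsSolution S P) (hn : 1 ≤ n) (ht : 1 ≤ t)
    (hD : D ∈ P) (hroot : .root ∈ D) (j : Fin n) : ∃ s i, .x s i ∈ D ∧ .v s i j ∉ D := by
  by_contra! hxv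
  have hvotes : votes chiS .q D ≤ votes chiS (.a j) D := by
    refine votes_le_votes_of_forall_imp (fun x _ => exists_qVertex_eq_of_chiS_eq ht)
      (aVertex_injective j) (chiS_aVertex j) fun k hq => ?_
    obtain ⟨s, i⟩ := k
    cases i using Fin.cases with
    | zero => exact h.v0_mem_of_root_mem hn hD hroot
    | succ i => exact hxv s i hq
  exact h.not_leadsIn_a hD hroot root_notMem_branchTail
    ((h.leadsIn_q_of_root_mem hn hD hroot).of_votes_le hvotes)

section CutGroups

variable {A : Set (VS n m t)} {i i' : Fin m}

theorem mem_of_x_mem_of_v_notMem (hA : ((GS S).induce A).Connected) (hroot : .root ∈ A)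
    (hx : .x s i ∈ A) (hv : .v s i j ∉ A) : j ∈ S i := by
  by_contra hj
  exact hv (mem_of_connected_of_root_mem hA hroot hx (posS_x s i) (posS_v s i j)
    (slot_some_lt_slot_none hj).le)

theorem le_of_x_mem_of_v_notMem (hA : ((GS S).induce A).Connected) (hroot : .root ∈ A)
    (hx : .x s i ∈ A) (hv : .v s i' j ∉ A) : i ≤ i' := by
  by_contra! hlt
  exact hv (mem_of_connected_of_root_mem hA hroot hx (posS_x s i) (posS_v s i' j)
    (slot_lt_slot hlt).le)

end CutGroups

theorem IsSolution.exists_cover (h : IsSolution S P) (hn : 1 ≤ n) (ht : 1 ≤ t) :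
    ∃ X : Finset (Fin m), X.card ≤ t ∧ ∀ j : Fin n, ∃ i ∈ X, j ∈ S i := by
  obtain ⟨R, hR, hroot⟩ := h.1.2.2.2.1 .root
  have hconn := h.1.2.2.2.2 R hR
  let cut (s : Fin t) : Finset (Fin m) :=
    Finset.univ.filter fun i => .x s i ∈ R ∧ ∃ j, .v s i j ∉ R
  have hcut (s : Fin t) : (cut s).card ≤ 1 := by
    refine Finset.card_le_one.2 fun i hi i' hi' => ?_
    obtain ⟨-, hx, j, hv⟩ := Finset.mem_filter.1 hi
    obtain ⟨-, hx', j', hv'⟩ := Finset.mem_filter.1 hi'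
    exact le_antisymm (le_of_x_mem_of_v_notMem hconn hroot hx hv')
      (le_of_x_mem_of_v_notMem hconn hroot hx' hv)
  refine ⟨Finset.univ.biUnion cut, ?_, fun j => ?_⟩
  · simpa using Finset.card_biUnion_le_card_mul Finset.univ cut 1 fun s _ => hcut s
  · obtain ⟨s, i, hx, hv⟩ := h.exists_x_mem_and_v_notMem hn ht hR hroot j
    exact ⟨i, Finset.mem_biUnion.2 ⟨s, Finset.mem_univ s, by simpa [cut] using ⟨hx, j, hv⟩⟩,
      mem_of_x_mem_of_v_notMem hconn hroot hx hv⟩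

end CoverOfSolution

section SolutionOfCover

variable {n m t : ℕ} {S : Fin m → Finset (Fin n)} {f : Fin t → Fin m} {z : VS n m t}

/-- Labels of the `t + 4` districts obtained from one chosen set per selection branch: the
singletons of `c_1` and `c_2`, the element vertices `u_1, …, u_n`, the district of the root, and
for each selection branch the part that is cut off. -/
inductive District (t : ℕ) : Type where
  | first
  | second
  | elements
  | center
  | tail (s : Fin t)
  deriving Fintype

theorem card_district : Fintype.card (District t) = t + 4 := by
  let toSum : District t ≃ Fin t ⊕ Fin 4 :=
    { toFun
        | .first => .inr 0
        | .second => .inr 1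
        | .elements => .inr 2
        | .center => .inr 3
        | .tail s => .inl s
      invFun := Sum.elim .tail ![.first, .second, .elements, .center]
      left_inv := by rintro (_ | _ | _ | _ | _) <;> rfl
      right_inv := by rintro (s | i) <;> [rfl; (fin_cases i <;> rfl)] }
  simpa using Fintype.card_congr toSum

/-- The last position on selection branch `s` that belongs to the district of the root: the branch
is cut right after `x_i` with `i = f s`. -/
def lastCenter (S : Fin m → Finset (Fin n)) (f : Fin t → Fin m) (s : Fin t) : ℕ :=
  slot S (f s) none

/-- The district of each vertex when `f s` is the set chosen on selection branch `s`. -/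
def districtOf (S : Fin m → Finset (Fin n)) (f : Fin t → Fin m) : VS n m t → District t
  | .c1 => .first
  | .c2 => .second
  | .u _ => .elements
  | .root | .w _ | .v0 _ _ => .center
  | .x s i => if slot S i none ≤ lastCenter S f s then .center else .tail s
  | .v s i j => if slot S i (some j) ≤ lastCenter S f s then .center else .tail s
  | .y s _ => .tail s

theorem districtOf_eq_first_iff : districtOf S f z = .first ↔ z = .c1 := by
  cases z <;> grind [districtOf]

theorem districtOf_eq_second_iff : districtOf S f z = .second ↔ z = .c2 := by
  cases z <;> grind [districtOf]

theorem districtOf_eq_elements_iff : districtOf S f z = .elements ↔ z ∈ branchTail S 0 2 := by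
  cases z with
  | root => simp [districtOf, root_notMem_branchTail]
  | _ =>
    rw [mem_branchTail_iff rfl]
    grind [districtOf]

theorem districtOf_eq_tail_iff {s : Fin t} :
    districtOf S f z = .tail s ↔ z ∈ branchTail S (2 + s) (lastCenter S f s + 1) := by
  have hlower (s) : n ≤ lastCenter S f s := le_slot
  have hupper (s) : lastCenter S f s < n + m * (n + 1) := slot_lt
  cases z with
  | x s' i => grind [districtOf, mem_branchTail_iff (posS_x s' i)]
  | v s' i j => grind [districtOf, mem_branchTail_iff (posS_v s' i j)]
  | root => simp [districtOf, root_notMem_branchTail]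
  | _ =>
    rw [mem_branchTail_iff rfl]
    grind [districtOf]

theorem districtOf_eq_center_iff : districtOf S f z = .center ↔
    z ∉ branchTail S 0 0 ∧ ∀ s : Fin t, z ∉ branchTail S (2 + s) (lastCenter S f s + 1) := by
  simp only [← districtOf_eq_tail_iff (f := f)]
  cases z with
  | root => simp [districtOf, root_notMem_branchTail]
  | _ =>
    rw [mem_branchTail_iff rfl]
    grind [districtOf]

theorem connected_induce_labelFiber (hn : 1 ≤ n) (S : Fin m → Finset (Fin n)) (f : Fin t → Fin m)
    (l : District t) :
    ((GS S).induce (labelFiber (districtOf S f) l : Set (VS n m t))).Connected := by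
  have hfiber {A : Set (VS n m t)} (hA : ∀ z, districtOf S f z = l ↔ z ∈ A) :
      (labelFiber (districtOf S f) l : Set (VS n m t)) = A :=
    Set.ext fun z => mem_labelFiber.trans (hA z)
  cases l with
  | first =>
    rw [hfiber (A := {.c1}) fun z => districtOf_eq_first_iff]
    exact connected_induce_of_forall_isParent_mem rfl fun x hx hne => absurd hx hne
  | second =>
    rw [hfiber (A := {.c2}) fun z => districtOf_eq_second_iff]
    exact connected_induce_of_forall_isParent_mem rfl fun x hx hne => absurd hx hne
  | elements =>
    rw [hfiber fun z => districtOf_eq_elements_iff]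
    exact connected_induce_branchTail (z := .u ⟨0, hn⟩) rfl
  | tail s =>
    rw [hfiber fun z => districtOf_eq_tail_iff]
    have hlast : lastCenter S f s < n + m * (n + 1) := slot_lt
    obtain ⟨z, hz⟩ := exists_posS_eq_of_lt S s (k := lastCenter S f s + 1) (by omega)
    exact connected_induce_branchTail hz
  | center =>
    rw [hfiber fun z => districtOf_eq_center_iff]
    refine connected_induce_of_forall_isParent_mem (b := .root) ?_ fun x hx hne => ⟨hne, ?_⟩
    · exact ⟨root_notMem_branchTail, fun s => root_notMem_branchTail⟩
    · exact fun y hparent => ⟨fun hy => hx.1 (hparent.mem_branchTail hy),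
        fun s hy => hx.2 s (hparent.mem_branchTail hy)⟩

theorem votes_a_center_lt_votes_q_center (hf : ∀ j, ∃ s, j ∈ S (f s)) (j : Fin n) :
    votes chiS (.a j) (labelFiber (districtOf S f) .center) <
      votes chiS .q (labelFiber (districtOf S f) .center) := by
  have hx_mem {s : Fin t} {i : Fin m} (hi : i ≤ f s) : districtOf S f (.x s i) = .center := by
    rw [districtOf, if_pos]
    rcases hi.lt_or_eq with hlt | rfl
    · exact (slot_lt_slot hlt).le
    · exact le_rfl
  have hv_cut {s : Fin t} {i : Fin m} (hi : lastCenter S f s < slot S i (some j)) :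
      districtOf S f (.v s i j) ≠ .center := by
    rw [districtOf, if_neg hi.not_ge]
    nofun
  refine votes_lt_votes_of_forall_imp (f := aVertex j) (fun z hz hzj => ?_) qVertex_injective
    chiS_qVertex (fun ⟨s, i⟩ => ?_) ?_
  · rcases eq_u_or_exists_aVertex_eq_of_chiS_eq hzj with rfl | hk
    · cases mem_labelFiber.1 hz
    · exact hk
  · rw [mem_labelFiber, mem_labelFiber]
    cases i using Fin.cases with
    | zero =>
      intro
      simp only [qVertex, Fin.cases_zero]
      split <;> rfl
    | succ i =>
      exact fun hv => hx_mem (not_lt.1 fun hlt => hv_cut (slot_lt_slot hlt) hv)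
  · obtain ⟨s, hj⟩ := hf j
    refine ⟨(s, (f s).succ), ?_, ?_⟩ <;> rw [mem_labelFiber]
    · exact hv_cut (slot_none_lt_slot_some hj)
    · exact hx_mem le_rfl

theorem winsIn_q_center (hf : ∀ j, ∃ s, j ∈ S (f s)) :
    winsIn chiS .q (labelFiber (districtOf S f) .center) := by
  intro c hc
  have hpos : 0 < votes chiS .q (labelFiber (districtOf S f) .center) :=
    votes_pos_iff.2 ⟨.root, mem_labelFiber.2 rfl, rfl⟩
  have hzero (hc : ∀ z : VS n m t, chiS z = c → districtOf S f z ≠ .center) :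
      votes chiS c (labelFiber (districtOf S f) .center) = 0 :=
    votes_eq_zero_iff.2 fun z hz hzc => hc z hzc (mem_labelFiber.1 hz)
  cases c with
  | q => exact absurd rfl hc
  | p => exact (hzero fun z hz => by cases z <;> cases hz <;> nofun).trans_lt hpos
  | b s => exact (hzero fun z hz => by cases z <;> cases hz; nofun).trans_lt hpos
  | a j => exact votes_a_center_lt_votes_q_center hf j

theorem votes_tail_lt_votes_b_tail {s : Fin t} {c : CS n t} {g : Fin (m + 1) → VS n m t}
    (hzero : districtOf S f (g 0) ≠ .tail s)
    (hg : ∀ z, districtOf S f z = .tail s → chiS z = c → ∃ i, g i = z) :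
    votes chiS c (labelFiber (districtOf S f) (.tail s)) <
      votes chiS (.b s) (labelFiber (districtOf S f) (.tail s)) :=
  votes_lt_votes_of_forall_imp (f := g) (g := VS.y s) (fun z hz => hg z (mem_labelFiber.1 hz))
    (fun _ _ heq => (VS.y.inj heq).2) (fun _ => rfl) (fun _ _ => mem_labelFiber.2 rfl)
    ⟨0, fun h => hzero (mem_labelFiber.1 h), mem_labelFiber.2 rfl⟩

theorem winsIn_b_tail (S : Fin m → Finset (Fin n)) (f : Fin t → Fin m) (s : Fin t) :
    winsIn chiS (.b s) (labelFiber (districtOf S f) (.tail s)) := by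
  intro c hc
  cases c with
  | p =>
    refine votes_tail_lt_votes_b_tail (g := fun _ => .root) nofun fun z hz hzc => ?_
    cases z <;> cases hzc <;> cases hz
  | b s' =>
    refine votes_tail_lt_votes_b_tail (g := fun _ => .root) nofun fun z hz hzc => ?_
    cases z <;> cases hzc
    cases hz
    exact absurd rfl hc
  | q =>
    refine votes_tail_lt_votes_b_tail (g := Fin.cases .root (VS.x s)) nofun fun z hz hzc => ?_
    cases z <;> cases hzc
    · cases hz
    · cases hz
    · rename_i s' i
      obtain rfl : s' = s := by grind [districtOf]
      exact ⟨i.succ, rfl⟩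
  | a j =>
    refine votes_tail_lt_votes_b_tail (g := fun i => aVertex j (s, i)) nofun fun z hz hzc => ?_
    cases z <;> cases hzc
    · cases hz
    · cases hz
    · rename_i s' i
      obtain rfl : s' = s := by grind [districtOf]
      exact ⟨i.succ, rfl⟩

/-- The only district that `c` leads, for `c` other than `p`; the value at `p` is arbitrary. -/
def homeDistrict : CS n t → District t
  | .p => .first
  | .q => .center
  | .a _ => .elements
  | .b s => .tail s

theorem eq_homeDistrict_of_leadsIn (hn : 1 ≤ n) (hf : ∀ j, ∃ s, j ∈ S (f s)) {c : CS n t}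
    (hc : c ≠ .p) {l : District t} (hlead : leadsIn chiS c (labelFiber (districtOf S f) l)) :
    l = homeDistrict c := by
  have hvoter : ∃ z, districtOf S f z = l ∧ chiS z = c := by
    obtain ⟨⟨z, hz⟩⟩ := (connected_induce_labelFiber hn S f l).nonempty
    obtain ⟨x, hx, hxc⟩ := hlead.exists_mem ⟨z, hz⟩
    exact ⟨x, mem_labelFiber.1 hx, hxc⟩
  obtain ⟨z, hzl, hzc⟩ := hvoter
  cases l with
  | first => exact absurd (by rw [← hzc, districtOf_eq_first_iff.1 hzl]; rfl) hc
  | second => exact absurd (by rw [← hzc, districtOf_eq_second_iff.1 hzl]; rfl) hc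
  | elements =>
    obtain ⟨j, rfl⟩ := exists_u_eq_of_mem_branchTail (districtOf_eq_elements_iff.1 hzl)
    rw [← hzc]
    rfl
  | center => rw [(winsIn_q_center hf).eq_of_leadsIn hlead]; rfl
  | tail s => rw [(winsIn_b_tail S f s).eq_of_leadsIn hlead]; rfl

theorem isSolution_image_labelFiber (hn : 1 ≤ n) (hf : ∀ j, ∃ s, j ∈ S (f s)) :
    IsSolution S (Finset.univ.image (labelFiber (districtOf S f))) := by
  have hpartition := isDistrictPartition_image_labelFiber (districtOf S f)
    (connected_induce_labelFiber hn S f)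
  rw [card_district] at hpartition
  have hmem (l : District t) : labelFiber (districtOf S f) l ∈
      Finset.univ.image (labelFiber (districtOf S f)) :=
    Finset.mem_image_of_mem _ (Finset.mem_univ l)
  have hc1 : .c1 ∈ labelFiber (districtOf S f) .first := mem_labelFiber.2 rfl
  have hc2 : .c2 ∈ labelFiber (districtOf S f) .second := mem_labelFiber.2 rfl
  refine ⟨hpartition, satisfyingFor_of_leadsIn_unique (hmem .first) (hmem .second) ?_ ?_ ?_ ?_⟩
  · intro heq
    rw [heq, mem_labelFiber] at hc1
    cases hc1
  · refine winsIn_of_forall_mem ⟨_, hc1⟩ fun z hz => ?_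
    rw [districtOf_eq_first_iff.1 (mem_labelFiber.1 hz)]
    rfl
  · refine winsIn_of_forall_mem ⟨_, hc2⟩ fun z hz => ?_
    rw [districtOf_eq_second_iff.1 (mem_labelFiber.1 hz)]
    rfl
  · simp only [Finset.forall_mem_image]
    intro c hc l _ l' _ hl hl'
    rw [eq_homeDistrict_of_leadsIn hn hf hc hl, eq_homeDistrict_of_leadsIn hn hf hc hl']

end SolutionOfCover

end SubdividedStar

theorem star_cover_iff_gerrymander_general (n m t : ℕ) (hn : 1 ≤ n) (ht : 1 ≤ t)
    (S : Fin m → Finset (Fin n)) :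
    (∃ X : Finset (Fin m), X.card ≤ t ∧ ∀ j : Fin n, ∃ i ∈ X, j ∈ S i) ↔
      (∃ P : Finset (Finset (VS n m t)),
        IsDistrictPartition (GS S) (t + 4) P ∧ SatisfyingFor chiS CS.p P) := by
  constructor
  · rintro ⟨X, hcard, hcover⟩
    have hX : X.Nonempty := (hcover ⟨0, hn⟩).imp fun i hi => hi.1
    obtain ⟨f, hf⟩ := exists_forall_mem_exists_eq_of_card_le (ι := Fin t) hX (by simpa using hcard)
    refine ⟨_, SubdividedStar.isSolution_image_labelFiber (f := f) hn fun j => ?_⟩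
    obtain ⟨i, hi, hj⟩ := hcover j
    obtain ⟨s, rfl⟩ := hf i hi
    exact ⟨s, hj⟩
  · rintro ⟨P, hP⟩
    exact SubdividedStar.IsSolution.exists_cover hP hn ht

/-- the reduction of Theorem 2.  Let `(U, F, t)` be a Set Cover instance in
which every element belongs to at least one set.  Then there exists `X ⊆ F` with `|X| ≤ t` and
`∪_{S ∈ X} S = U` iff the subdivided-star gerrymandering instance constructed from `(U, F, t)`
admits a district-partition into `k = t + 4` districts that is satisfying for the preferred
candidate `p`. -/
theorem star_cover_iff_gerrymander (n m t : ℕ) (hn : 1 ≤ n) (ht : 1 ≤ t) (htm : t ≤ m)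
    (S : Fin m → Finset (Fin n))
    (hcov : ∀ j : Fin n, ∃ i : Fin m, j ∈ S i) :
    (∃ X : Finset (Fin m), X.card ≤ t ∧ ∀ j : Fin n, ∃ i ∈ X, j ∈ S i) ↔
      (∃ P : Finset (Finset (VS n m t)),
        IsDistrictPartition (GS S) (t + 4) P ∧ SatisfyingFor chiS CS.p P) :=
  star_cover_iff_gerrymander_general n m t hn ht S
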